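/- For every integer r ≥ 1 and every subset W ⊆ V(G_r) with |W| ≤ 3r² (i.e. |W| ≤ |V(G_r)|/2), the number of edges of the finite hexagonal grid G_r with exactly one endpoint in W satisfies |ℰ_{G_r}(W)| ≥ (√6 − √3) · √|W|. -/

import Mathlib

/-- Adjacency of the infinite hexagonal grid `G∞` in brick-wall coordinates on `ℤ × ℤ`:
`(x,y)` and `(x',y')` are adjacent iff `y' = y` and `|x' - x| = 1`, or
`x' = x` and `|y' - y| = 1` and `x + min y y'` is even. -/
def hexAdj (v w : ℤ × ℤ) : Prop :=
  (v.2 = w.2 ∧ (v.1 - w.1).natAbs = 1) ∨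
  (v.1 = w.1 ∧ (v.2 - w.2).natAbs = 1 ∧ Even (v.1 + min v.2 w.2))

/-- The neighborhood `𝒩(W)`: vertices not in `W` adjacent to some vertex of `W`. -/
def hexNbhd (W : Set (ℤ × ℤ)) : Set (ℤ × ℤ) :=
  {v | v ∉ W ∧ ∃ w ∈ W, hexAdj v w}

/-- The boundary `ℬ(W)`: vertices of `W` adjacent to some vertex not in `W`. -/
def hexBdry (W : Set (ℤ × ℤ)) : Set (ℤ × ℤ) :=
  {v | v ∈ W ∧ ∃ w, w ∉ W ∧ hexAdj v w}

/-- The outgoing edges `ℰ(W)`, encoded as ordered pairs `(v, w)` with `v ∈ W`, `w ∉ W`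
and `v` adjacent to `w`; each edge with exactly one endpoint in `W` corresponds to
exactly one such pair. -/
def hexCutEdges (W : Set (ℤ × ℤ)) : Set ((ℤ × ℤ) × (ℤ × ℤ)) :=
  {p | p.1 ∈ W ∧ p.2 ∉ W ∧ hexAdj p.1 p.2}

/-- The hexagonal cell `C(a,b)`, with vertex set `{(2a+b+i, b+j) : i ∈ {0,1,2}, j ∈ {0,1}}`. -/
def hexCell (a b : ℤ) : Set (ℤ × ℤ) :=
  {(2*a+b, b), (2*a+b+1, b), (2*a+b+2, b),
   (2*a+b, b+1), (2*a+b+1, b+1), (2*a+b+2, b+1)}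

/-- The vertex set `V(G_r)` of the finite hexagonal grid of radius `r`: the union of the
cells `C(a,b)` with `(|a| + |b| + |a+b|)/2 ≤ r - 1`. -/
def gridVerts (r : ℕ) : Set (ℤ × ℤ) :=
  {v | ∃ a b : ℤ, a.natAbs + b.natAbs + (a+b).natAbs ≤ 2*(r-1) ∧ v ∈ hexCell a b}

/-- `𝒩_{G_r}(W)`: vertices of `V(G_r) \ W` adjacent to some vertex of `W`. -/
def hexNbhdIn (r : ℕ) (W : Set (ℤ × ℤ)) : Set (ℤ × ℤ) :=
  {v | v ∈ gridVerts r ∧ v ∉ W ∧ ∃ w ∈ W, hexAdj v w}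

/-- `ℬ_{G_r}(W)`: vertices of `W` adjacent to some vertex of `V(G_r) \ W`. -/
def hexBdryIn (r : ℕ) (W : Set (ℤ × ℤ)) : Set (ℤ × ℤ) :=
  {v | v ∈ W ∧ ∃ w, w ∈ gridVerts r ∧ w ∉ W ∧ hexAdj v w}

/-- `ℰ_{G_r}(W)`: the edges of `G_r` with exactly one endpoint in `W ⊆ V(G_r)`, encoded
as ordered pairs `(v, w)` with `v ∈ W`, `w ∈ V(G_r) \ W`, `v` adjacent to `w`. -/
def hexCutEdgesIn (r : ℕ) (W : Set (ℤ × ℤ)) : Set ((ℤ × ℤ) × (ℤ × ℤ)) :=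
  {p | p.1 ∈ W ∧ p.2 ∈ gridVerts r ∧ p.2 ∉ W ∧ hexAdj p.1 p.2}

/-- The index `ind_i(x,y)` of the direction-`i` row containing `(x,y)`
(directions numbered `0, 1, 2` for the paper's `1, 2, 3`):
`ind_1 = y`, `ind_2 = ⌊(y-x)/2⌋`, `ind_3 = ⌊(x+y)/2⌋`. -/
def rowInd : Fin 3 → ℤ × ℤ → ℤ
  | 0, v => v.2
  | 1, v => Int.fdiv (v.2 - v.1) 2
  | 2, v => Int.fdiv (v.1 + v.2) 2

/-- The linear parameter `p_i` along direction-`i` rows: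
`p_1 = x`, `p_2 = x + y`, `p_3 = x - y`. -/
def rowParam : Fin 3 → ℤ × ℤ → ℤ
  | 0, v => v.1
  | 1, v => v.1 + v.2
  | 2, v => v.1 - v.2

/-- A set of integers is consecutive if it contains every integer between any two of
its elements. -/
def ConsecutiveSet (S : Set ℤ) : Prop :=
  ∀ a ∈ S, ∀ b ∈ S, ∀ k : ℤ, a ≤ k → k ≤ b → k ∈ S

/-- `v` is an outermost neighbor of `W` for direction `i`: the direction-`i` row of `v`
is gray, and the parameter of `v` is `m - 1` or `M + 1`, where `m` and `M` are the
minimum and maximum of the parameter over `W` intersected with that row. -/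
def IsOutermostNeighbor (W : Set (ℤ × ℤ)) (i : Fin 3) (v : ℤ × ℤ) : Prop :=
  (rowParam i v + 1 ∈ rowParam i '' {w ∈ W | rowInd i w = rowInd i v} ∧
    ∀ q ∈ rowParam i '' {w ∈ W | rowInd i w = rowInd i v}, rowParam i v + 1 ≤ q) ∨
  (rowParam i v - 1 ∈ rowParam i '' {w ∈ W | rowInd i w = rowInd i v} ∧
    ∀ q ∈ rowParam i '' {w ∈ W | rowInd i w = rowInd i v}, q ≤ rowParam i v - 1)

/-- Three integer coordinates on a finite set `V` identifying it with the points
`(A, B, C) ∈ [1 - r, r]³` with `A + B + C ∈ {1, 2}`. Two points of `V` are neighbours in the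
hexagonal grid iff they differ in exactly one coordinate. -/
structure HexCoords {X : Type*} (r : ℕ) (V : Finset X) (a b c : X → ℤ) : Prop where
  inj : ∀ v ∈ V, ∀ w ∈ V, a v = a w → b v = b w → c v = c w → v = w
  bounds : ∀ v ∈ V, (1 - r ≤ a v ∧ a v ≤ r) ∧ (1 - r ≤ b v ∧ b v ≤ r) ∧
    (1 - r ≤ c v ∧ c v ≤ r) ∧ (a v + b v + c v = 1 ∨ a v + b v + c v = 2)
  surj : ∀ A B C : ℤ, 1 - r ≤ A → A ≤ r → 1 - r ≤ B → B ≤ r → 1 - r ≤ C → C ≤ r →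
    (A + B + C = 1 ∨ A + B + C = 2) → ∃ v ∈ V, a v = A ∧ b v = B ∧ c v = C

/-- Indices of the rows of `a` contained in `S`. -/
noncomputable def fullRows {X : Type*} [DecidableEq X] (r : ℕ) (V S : Finset X) (a : X → ℤ) : Finset ℤ :=
  {k ∈ Finset.Icc (1 - (r : ℤ)) r | ∀ v ∈ V, a v = k → v ∈ S}

/-- Indices of the rows of `a` meeting both `S` and its complement. -/
noncomputable def mixedRows {X : Type*} [DecidableEq X] (r : ℕ) (V S : Finset X) (a : X → ℤ) : Finset ℤ :=
  {k ∈ Finset.Icc (1 - (r : ℤ)) r | (∃ v ∈ V, a v = k ∧ v ∈ S) ∧ ∃ v ∈ V, a v = k ∧ v ∉ S}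

/-- Ordered cut edges of `S` along which both `a` and `b` are constant. -/
def cutAlong {X : Type*} [DecidableEq X] (V S : Finset X) (a b : X → ℤ) : Finset (X × X) :=
  {p ∈ S ×ˢ (V \ S) | a p.1 = a p.2 ∧ b p.1 = b p.2}

theorem cutAlong_comm {X : Type*} [DecidableEq X] (V S : Finset X) (a b : X → ℤ) :
    cutAlong V S a b = cutAlong V S b a := by
  simp only [cutAlong, and_comm]

/-- A predicate on `ℤ` taking different values at `m` and at a later point changes at some
step in between. -/
theorem exists_step_change (P : ℤ → Prop) (m : ℤ) (d : ℕ) (h : ¬(P m ↔ P (m + d))) :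
    ∃ t, m ≤ t ∧ t < m + d ∧ ¬(P t ↔ P (t + 1)) := by
  induction d with
  | zero => simp at h
  | succ d ih =>
    by_cases hd : P m ↔ P (m + d)
    · refine ⟨m + d, by omega, by push_cast; omega, ?_⟩
      rw [hd] at h
      push_cast at h
      rwa [add_assoc]
    · obtain ⟨t, h1, h2, h3⟩ := ih hd
      exact ⟨t, h1, by push_cast; omega, h3⟩

/-- If all sums of an element of `A` and an element of `B` are far from zero, then both sets
lie near the same end of `[1 - r, r]`. -/
theorem card_add_card_le_of_sums_far {r : ℕ} {A B : Finset ℤ} (hA : A.Nonempty)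
    (hB : B.Nonempty) (hAr : ∀ i ∈ A, 1 - r ≤ i ∧ i ≤ r) (hBr : ∀ j ∈ B, 1 - r ≤ j ∧ j ≤ r)
    (hsum : ∀ i ∈ A, ∀ j ∈ B, r + 2 ≤ i + j ∨ i + j ≤ -r) : A.card + B.card ≤ r := by
  obtain ⟨i₀, hi₀⟩ := hA
  obtain ⟨j₀, hj₀⟩ := hB
  have bi₀ := hAr i₀ hi₀
  rcases hsum i₀ hi₀ j₀ hj₀ with hpos | hneg
  · have hB' : ∀ j ∈ B, 0 < j := fun j hj => by
      have := hsum i₀ hi₀ j hj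
      have := hBr j hj
      have := hBr j₀ hj₀
      omega
    have hA' : ∀ i ∈ A, 0 < i := fun i hi => by
      have := hsum i hi j₀ hj₀
      have := hAr i hi
      have := hBr j₀ hj₀
      have := hB' j₀ hj₀
      omega
    obtain ⟨i, hi, imin⟩ := A.exists_min_image id ⟨i₀, hi₀⟩
    obtain ⟨j, hj, jmin⟩ := B.exists_min_image id ⟨j₀, hj₀⟩
    have c1 := Finset.card_le_card (show A ⊆ Finset.Icc i r from fun k hk =>
      Finset.mem_Icc.mpr ⟨imin k hk, (hAr k hk).2⟩)
    have c2 := Finset.card_le_card (show B ⊆ Finset.Icc j r from fun k hk =>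
      Finset.mem_Icc.mpr ⟨jmin k hk, (hBr k hk).2⟩)
    rw [Int.card_Icc] at c1 c2
    have := hsum i hi j hj
    have := hA' i hi
    have := hB' j hj
    have := hAr i hi
    have := hBr j hj
    omega
  · have hB' : ∀ j ∈ B, j < 0 := fun j hj => by
      have := hsum i₀ hi₀ j hj
      have := hBr j hj
      have := hBr j₀ hj₀
      omega
    have hA' : ∀ i ∈ A, i < 0 := fun i hi => by
      have := hsum i hi j₀ hj₀
      have := hAr i hi
      have := hBr j₀ hj₀
      have := hB' j₀ hj₀
      omega
    obtain ⟨i, hi, imax⟩ := A.exists_max_image id ⟨i₀, hi₀⟩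
    obtain ⟨j, hj, jmax⟩ := B.exists_max_image id ⟨j₀, hj₀⟩
    have c1 := Finset.card_le_card (show A ⊆ Finset.Icc (1 - (r : ℤ)) i from fun k hk =>
      Finset.mem_Icc.mpr ⟨(hAr k hk).1, imax k hk⟩)
    have c2 := Finset.card_le_card (show B ⊆ Finset.Icc (1 - (r : ℤ)) j from fun k hk =>
      Finset.mem_Icc.mpr ⟨(hBr k hk).1, jmax k hk⟩)
    rw [Int.card_Icc] at c1 c2
    have := hsum i hi j hj
    have := hA' i hi
    have := hB' j hj
    have := hAr i hi
    have := hBr j hj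
    omega

theorem sq_bound_of_thin {r N K g g' : ℕ} (hN : N ≤ 3 * r ^ 2) (hg' : g' ≤ 2 * r)
    (hNg : N ≤ 2 * (g * g')) (hg : 2 * r + g ≤ 2 * K) : 103 * N ≤ 200 * K ^ 2 := by
  have h1 : (2 * r + g) ^ 2 ≤ (2 * K) ^ 2 := Nat.pow_le_pow_left hg 2
  have h2 : N ≤ 2 * (g * (2 * r)) := hNg.trans (by gcongr)
  by_cases hgr : r ≤ 2 * g
  · have h3 : (5 * r) ^ 2 ≤ (2 * (2 * r + g)) ^ 2 := Nat.pow_le_pow_left (by omega) 2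
    linarith
  · have h3 : 2 * g * r ≤ r * r := Nat.mul_le_mul_right r (by omega)
    linarith [Nat.zero_le (g ^ 2)]

theorem sq_bound_of_thick {r N M K g g' : ℕ} (hN : N ≤ 3 * r ^ 2) (hM : 3 * r ^ 2 ≤ M)
    (hg' : g' ≤ 2 * r) (hMg : M ≤ 2 * (g * g')) (hg : 2 * r + g ≤ 2 * K) :
    103 * N ≤ 200 * K ^ 2 := by
  have h1 : (2 * r + g) ^ 2 ≤ (2 * K) ^ 2 := Nat.pow_le_pow_left hg 2
  have h2 : M ≤ 2 * (g * (2 * r)) := hMg.trans (by gcongr)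
  linarith [Nat.zero_le (g ^ 2)]

theorem sq_bound_of_balanced {N K x y z : ℕ} (hxy : N ≤ 2 * (x * y)) (hyz : N ≤ 2 * (y * z))
    (hzx : N ≤ 2 * (z * x)) (h : x + y + z ≤ 2 * K) : 103 * N ≤ 200 * K ^ 2 := by
  have h1 := Nat.pow_le_pow_left h 2
  zify at *
  linarith [sq_nonneg ((x : ℤ) - y), sq_nonneg ((y : ℤ) - z), sq_nonneg ((z : ℤ) - x)]

/-- The numerical core of the isoperimetric inequality: `pᵢ`, `fᵢ`, `eᵢ` are the numbers of
mixed, full and empty rows in direction `i`, and `kᵢⱼ` counts cut edges common to rows of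
directions `i` and `j`. -/
theorem row_count_inequality {r N M k12 k23 k31 p1 p2 p3 f1 f2 f3 e1 e2 e3 : ℕ}
    (hN : N ≤ 3 * r ^ 2) (hM : 3 * r ^ 2 ≤ M)
    (m1 : p1 ≤ k12 + k31) (m2 : p2 ≤ k23 + k12) (m3 : p3 ≤ k31 + k23)
    (s1 : p1 + f1 + e1 = 2 * r) (s2 : p2 + f2 + e2 = 2 * r) (s3 : p3 + f3 + e3 = 2 * r)
    (w12 : N ≤ 2 * ((2 * r - e1) * (2 * r - e2))) (w23 : N ≤ 2 * ((2 * r - e2) * (2 * r - e3)))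
    (w31 : N ≤ 2 * ((2 * r - e3) * (2 * r - e1))) (c12 : M ≤ 2 * ((2 * r - f1) * (2 * r - f2)))
    (c23 : M ≤ 2 * ((2 * r - f2) * (2 * r - f3))) (c31 : M ≤ 2 * ((2 * r - f3) * (2 * r - f1)))
    (x12 : 0 < f1 → 0 < e2 → f1 + e2 ≤ r) (x23 : 0 < f2 → 0 < e3 → f2 + e3 ≤ r)
    (x31 : 0 < f3 → 0 < e1 → f3 + e1 ≤ r) (x21 : 0 < f2 → 0 < e1 → f2 + e1 ≤ r)
    (x32 : 0 < f3 → 0 < e2 → f3 + e2 ≤ r) (x13 : 0 < f1 → 0 < e3 → f1 + e3 ≤ r) :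
    103 * N ≤ 200 * (k12 + k23 + k31) ^ 2 := by
  obtain ⟨G1, hG1⟩ : ∃ G, G = 2 * r - e1 := ⟨_, rfl⟩
  obtain ⟨G2, hG2⟩ : ∃ G, G = 2 * r - e2 := ⟨_, rfl⟩
  obtain ⟨G3, hG3⟩ : ∃ G, G = 2 * r - e3 := ⟨_, rfl⟩
  obtain ⟨H1, hH1⟩ : ∃ H, H = 2 * r - f1 := ⟨_, rfl⟩
  obtain ⟨H2, hH2⟩ : ∃ H, H = 2 * r - f2 := ⟨_, rfl⟩
  obtain ⟨H3, hH3⟩ : ∃ H, H = 2 * r - f3 := ⟨_, rfl⟩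
  rw [← hG1, ← hG2] at w12
  rw [← hG2, ← hG3] at w23
  rw [← hG3, ← hG1] at w31
  rw [← hH1, ← hH2] at c12
  rw [← hH2, ← hH3] at c23
  rw [← hH3, ← hH1] at c31
  obtain ⟨K, hK⟩ : ∃ K, K = k12 + k23 + k31 := ⟨_, rfl⟩
  rw [← hK]
  have hpK : p1 + p2 + p3 ≤ 2 * K := by omega
  have hcases : 3 * r ≤ 2 * K ∨ (f1 = 0 ∧ f2 = 0 ∧ f3 = 0) ∨ (e1 = 0 ∧ e2 = 0 ∧ e3 = 0) ∨
      2 * r + G1 ≤ 2 * K ∨ 2 * r + G2 ≤ 2 * K ∨ 2 * r + G3 ≤ 2 * K ∨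
      2 * r + H1 ≤ 2 * K ∨ 2 * r + H2 ≤ 2 * K ∨ 2 * r + H3 ≤ 2 * K := by
    clear hN hM w12 w23 w31 c12 c23 c31
    rcases Nat.eq_zero_or_pos f1 with h1 | h1 <;> rcases Nat.eq_zero_or_pos f2 with h2 | h2 <;>
    rcases Nat.eq_zero_or_pos f3 with h3 | h3 <;> rcases Nat.eq_zero_or_pos e1 with h4 | h4 <;>
    rcases Nat.eq_zero_or_pos e2 with h5 | h5 <;> rcases Nat.eq_zero_or_pos e3 with h6 | h6 <;>
    first
    | exact Or.inr (Or.inl ⟨h1, h2, h3⟩)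
    | exact Or.inr (Or.inr (Or.inl ⟨h4, h5, h6⟩))
    | simp only [h1, h2, h3, h4, h5, h6, forall_const] at *; omega
  rcases hcases with hc | ⟨h1, h2, h3⟩ | ⟨h1, h2, h3⟩ | hc | hc | hc | hc | hc | hc
  · have := Nat.pow_le_pow_left hc 2
    linarith
  · exact sq_bound_of_balanced w12 w23 w31 (by omega)
  · exact sq_bound_of_balanced (hN.trans (hM.trans c12)) (hN.trans (hM.trans c23))
      (hN.trans (hM.trans c31)) (by omega)
  · exact sq_bound_of_thin hN (by omega) w12 hc
  · exact sq_bound_of_thin hN (by omega) w23 hc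
  · exact sq_bound_of_thin hN (by omega) w31 hc
  · exact sq_bound_of_thick hN hM (by omega) c12 hc
  · exact sq_bound_of_thick hN hM (by omega) c23 hc
  · exact sq_bound_of_thick hN hM (by omega) c31 hc

namespace HexCoords

variable {X : Type*} {r : ℕ} {V S : Finset X} {a b c : X → ℤ}

theorem rotate (h : HexCoords r V a b c) : HexCoords r V b c a where
  inj v hv w hw h1 h2 h3 := h.inj v hv w hw h3 h1 h2
  bounds v hv := by have := h.bounds v hv; omega
  surj A B C h1 h2 h3 h4 h5 h6 h7 := by
    obtain ⟨v, hv, e1, e2, e3⟩ := h.surj C A B h5 h6 h1 h2 h3 h4 (by omega)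
    exact ⟨v, hv, e2, e3, e1⟩

theorem swap (h : HexCoords r V a b c) : HexCoords r V b a c where
  inj v hv w hw h1 h2 h3 := h.inj v hv w hw h2 h1 h3
  bounds v hv := by have := h.bounds v hv; omega
  surj A B C h1 h2 h3 h4 h5 h6 h7 := by
    obtain ⟨v, hv, e1, e2, e3⟩ := h.surj B A C h3 h4 h1 h2 h5 h6 (by omega)
    exact ⟨v, hv, e2, e1, e3⟩

theorem row_nonempty (h : HexCoords r V a b c) {k : ℤ} (h1 : 1 - r ≤ k) (h2 : k ≤ r) :
    ∃ v ∈ V, a v = k := by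
  obtain ⟨v, hv, e, -⟩ := h.surj k (1 - k) 0 h1 h2 (by omega) (by omega) (by omega)
    (by omega) (by omega)
  exact ⟨v, hv, e⟩

/-- The part of the hexagon where `a` is positive and `b` is not is a rhombus. -/
theorem card_rhombus (h : HexCoords r V a b c) :
    2 * r ^ 2 ≤ (V.filter fun v => 0 < a v ∧ b v ≤ 0).card := by
  have hcard : (({1, 2} : Finset ℤ) ×ˢ (Finset.Icc 1 (r : ℤ) ×ˢ Finset.Icc (1 - (r : ℤ)) 0)).card
      = 2 * r ^ 2 := by
    rw [Finset.card_product, Finset.card_product, Int.card_Icc, Int.card_Icc, pow_two]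
    congr 2 <;> omega
  rw [← hcard]
  refine Finset.card_le_card_of_surjOn (fun v => (a v + b v + c v, a v, b v)) ?_
  rintro ⟨s, i, j⟩ hp
  simp only [Finset.coe_product, Set.mem_prod, Finset.mem_coe, Finset.mem_Icc,
    Finset.mem_insert, Finset.mem_singleton] at hp
  obtain ⟨v, hv, e1, e2, e3⟩ := h.surj i j (s - i - j) (by omega) (by omega) (by omega)
    (by omega) (by omega) (by omega) (by omega)
  refine ⟨v, ?_, ?_⟩
  · simp only [Finset.coe_filter, Set.mem_ofPred_eq]
    exact ⟨hv, by omega, by omega⟩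
  · simp only [Prod.mk.injEq]
    omega

variable [DecidableEq X]

/-- A mixed row contains a cut edge. -/
theorem exists_cut_of_mixed (h : HexCoords r V a b c) (hS : S ⊆ V) {k : ℤ}
    (hk : k ∈ mixedRows r V S a) :
    ∃ p ∈ cutAlong V S a b ∪ cutAlong V S a c, a p.1 = k := by
  simp only [mixedRows, Finset.mem_filter, Finset.mem_Icc] at hk
  obtain ⟨⟨hk1, hk2⟩, ⟨v, hv, hvk, hvS⟩, ⟨w, hw, hwk, hwS⟩⟩ := hk
  let P : ℤ → Prop := fun t => ∃ u ∈ S, a u = k ∧ b u - c u = t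
  have hP : ∀ u ∈ V, a u = k → (P (b u - c u) ↔ u ∈ S) := by
    intro u hu huk
    refine ⟨?_, fun hs => ⟨u, hs, huk, rfl⟩⟩
    rintro ⟨u', hu', e1, e2⟩
    have b1 := h.bounds u hu
    have b2 := h.bounds u' (hS hu')
    rwa [h.inj u hu u' (hS hu') (by omega) (by omega) (by omega)]
  have key : ∀ x ∈ V, ∀ y ∈ V, a x = k → a y = k → ¬(x ∈ S ↔ y ∈ S) →
      b x - c x ≤ b y - c y → ∃ p ∈ cutAlong V S a b ∪ cutAlong V S a c, a p.1 = k := by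
    intro x hx y hy hxk hyk hxy hle
    have bx := h.bounds x hx
    have bY := h.bounds y hy
    obtain ⟨d, hd⟩ := Int.eq_ofNat_of_zero_le (sub_nonneg.mpr hle)
    have hd' : b y - c y = b x - c x + d := by omega
    obtain ⟨t, t1, t2, t3⟩ := exists_step_change P (b x - c x) d (by
      rw [← hd', hP x hx hxk, hP y hy hyk]; exact hxy)
    have hex : ∀ s, b x - c x ≤ s → s ≤ b y - c y →
        ∃ u ∈ V, a u = k ∧ b u = (s + 2 - k) / 2 ∧ c u = (2 - k - s) / 2 := by
      intro s s1 s2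
      exact h.surj k _ _ hk1 hk2 (by omega) (by omega) (by omega) (by omega) (by omega)
    obtain ⟨u, hu, u1, u2, u3⟩ := hex t t1 (by omega)
    obtain ⟨u', hu', v1, v2, v3⟩ := hex (t + 1) (by omega) (by omega)
    have et : b u - c u = t := by have := h.bounds u hu; omega
    have et' : b u' - c u' = t + 1 := by have := h.bounds u' hu'; omega
    rw [← et', hP u' hu' v1, ← et, hP u hu u1] at t3
    have hbc : b u = b u' ∨ c u = c u' := by omega
    by_cases hus : u ∈ S
    · have hus' : u' ∉ S := by tauto
      refine ⟨(u, u'), ?_, u1⟩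
      simp only [cutAlong, Finset.mem_union, Finset.mem_filter, Finset.mem_product,
        Finset.mem_sdiff]
      rcases hbc with e | e
      · exact Or.inl ⟨⟨hus, hu', hus'⟩, u1.trans v1.symm, e⟩
      · exact Or.inr ⟨⟨hus, hu', hus'⟩, u1.trans v1.symm, e⟩
    · have hus' : u' ∈ S := by tauto
      refine ⟨(u', u), ?_, v1⟩
      simp only [cutAlong, Finset.mem_union, Finset.mem_filter, Finset.mem_product,
        Finset.mem_sdiff]
      rcases hbc with e | e
      · exact Or.inl ⟨⟨hus', hu, hus⟩, v1.trans u1.symm, e.symm⟩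
      · exact Or.inr ⟨⟨hus', hu, hus⟩, v1.trans u1.symm, e.symm⟩
  rcases le_total (b v - c v) (b w - c w) with hle | hle
  · exact key v hv w hw hvk hwk (by tauto) hle
  · exact key w hw v hv hwk hvk (by tauto) hle

theorem card_mixedRows_le (h : HexCoords r V a b c) (hS : S ⊆ V) :
    (mixedRows r V S a).card ≤ (cutAlong V S a b).card + (cutAlong V S c a).card := by
  rw [cutAlong_comm V S c a]
  refine le_trans ?_ (Finset.card_union_le _ _)
  refine Finset.card_le_card_of_surjOn (fun p => a p.1) fun k hk => ?_
  obtain ⟨p, hp, e⟩ := h.exists_cut_of_mixed hS hk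
  exact ⟨p, hp, e⟩

/-- Every row is full, empty or mixed. -/
theorem card_rows (h : HexCoords r V a b c) :
    (mixedRows r V S a).card + (fullRows r V S a).card + (fullRows r V (V \ S) a).card
      = 2 * r := by
  have hdisj : Disjoint (mixedRows r V S a) (fullRows r V S a) := by
    rw [Finset.disjoint_left]
    intro k hk hk'
    simp only [mixedRows, fullRows, Finset.mem_filter] at hk hk'
    obtain ⟨-, -, v, hv, e, hs⟩ := hk
    exact hs (hk'.2 v hv e)
  have hdisj' : Disjoint (mixedRows r V S a ∪ fullRows r V S a) (fullRows r V (V \ S) a) := by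
    rw [Finset.disjoint_left]
    intro k hk hk'
    simp only [mixedRows, fullRows, Finset.mem_union, Finset.mem_filter, Finset.mem_Icc,
      Finset.mem_sdiff] at hk hk'
    rcases hk with hk | hk
    · obtain ⟨-, ⟨v, hv, e, hs⟩, -⟩ := hk
      exact (hk'.2 v hv e).2 hs
    · obtain ⟨v, hv, e⟩ := h.row_nonempty hk.1.1 hk.1.2
      exact (hk'.2 v hv e).2 (hk.2 v hv e)
  rw [← Finset.card_union_of_disjoint hdisj, ← Finset.card_union_of_disjoint hdisj']
  have : mixedRows r V S a ∪ fullRows r V S a ∪ fullRows r V (V \ S) a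
      = Finset.Icc (1 - (r : ℤ)) r := by
    ext k
    simp only [mixedRows, fullRows, Finset.mem_union, Finset.mem_filter, Finset.mem_sdiff]
    constructor
    · tauto
    · intro hk
      by_cases h1 : ∀ v ∈ V, a v = k → v ∈ S
      · exact Or.inl (Or.inr ⟨hk, h1⟩)
      by_cases h2 : ∀ v ∈ V, a v = k → v ∉ S
      · exact Or.inr ⟨hk, fun v hv e => ⟨hv, h2 v hv e⟩⟩
      push Not at h1 h2
      exact Or.inl (Or.inl ⟨hk, h2, h1⟩)
  rw [this, Int.card_Icc]
  omega

/-- Two rows of different directions share at most two points. -/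
theorem card_le_mul (h : HexCoords r V a b c) (hS : S ⊆ V) :
    S.card ≤ 2 * ((2 * r - (fullRows r V (V \ S) a).card)
      * (2 * r - (fullRows r V (V \ S) b).card)) := by
  have himage : ∀ {a b c : X → ℤ}, HexCoords r V a b c →
      (S.image a).card ≤ 2 * r - (fullRows r V (V \ S) a).card := by
    intro a b c h
    have hsub : S.image a ⊆ Finset.Icc (1 - (r : ℤ)) r \ fullRows r V (V \ S) a := by
      intro k hk
      obtain ⟨v, hv, rfl⟩ := Finset.mem_image.mp hk
      have := h.bounds v (hS hv)
      rw [Finset.mem_sdiff, Finset.mem_Icc, fullRows, Finset.mem_filter]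
      refine ⟨this.1, fun hf => ?_⟩
      exact (Finset.mem_sdiff.mp (hf.2 v (hS hv) rfl)).2 hv
    have hc := Finset.card_le_card hsub
    have hrows : fullRows r V (V \ S) a ⊆ Finset.Icc (1 - (r : ℤ)) r :=
      Finset.filter_subset _ _
    rw [Finset.card_sdiff_of_subset hrows, Int.card_Icc] at hc
    omega
  refine le_trans ?_ (Nat.mul_le_mul_left 2 (Nat.mul_le_mul (himage h) (himage h.swap)))
  have hcard : (({1, 2} : Finset ℤ) ×ˢ (S.image a ×ˢ S.image b)).card
      = 2 * ((S.image a).card * (S.image b).card) := by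
    rw [Finset.card_product, Finset.card_product]; rfl
  rw [← hcard]
  refine Finset.card_le_card_of_injOn (fun v => (a v + b v + c v, a v, b v)) ?_ ?_
  · intro v hv
    have := h.bounds v (hS hv)
    simp only [Finset.coe_product, Set.mem_prod, Finset.mem_coe]
    exact ⟨by simpa using this.2.2.2, Finset.mem_image_of_mem _ hv,
      Finset.mem_image_of_mem _ hv⟩
  · intro v hv w hw e
    simp only [Prod.mk.injEq] at e
    exact h.inj v (hS hv) w (hS hw) e.2.1 e.2.2 (by omega)

/-- A full row of one direction and an empty row of another direction do not meet. -/
theorem card_full_add_card_empty_le (h : HexCoords r V a b c)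
    (ha : 0 < (fullRows r V S a).card) (hb : 0 < (fullRows r V (V \ S) b).card) :
    (fullRows r V S a).card + (fullRows r V (V \ S) b).card ≤ r := by
  have hbd : ∀ {T : Finset X} {a : X → ℤ} {k : ℤ}, k ∈ fullRows r V T a →
      1 - r ≤ k ∧ k ≤ r := by
    intro T a k hk
    exact Finset.mem_Icc.mp (Finset.mem_filter.mp hk).1
  have hsum : ∀ i ∈ fullRows r V S a, ∀ j ∈ fullRows r V (V \ S) b,
      r + 2 ≤ i + j ∨ i + j ≤ -r := by
    intro i hi j hj
    by_contra hcon
    have bi := hbd hi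
    have bj := hbd hj
    have : ∃ v ∈ V, a v = i ∧ b v = j := by
      by_cases hij : 1 - i - j < 1 - (r : ℤ)
      · obtain ⟨v, hv, e1, e2, -⟩ := h.surj i j (2 - i - j) bi.1 bi.2 bj.1 bj.2
          (by omega) (by omega) (by omega)
        exact ⟨v, hv, e1, e2⟩
      · obtain ⟨v, hv, e1, e2, -⟩ := h.surj i j (1 - i - j) bi.1 bi.2 bj.1 bj.2
          (by omega) (by omega) (by omega)
        exact ⟨v, hv, e1, e2⟩
    obtain ⟨v, hv, e1, e2⟩ := this
    exact (Finset.mem_sdiff.mp ((Finset.mem_filter.mp hj).2 v hv e2)).2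
      ((Finset.mem_filter.mp hi).2 v hv e1)
  exact card_add_card_le_of_sums_far (Finset.card_pos.mp ha) (Finset.card_pos.mp hb)
    (fun i => hbd) (fun j => hbd) hsum

/-- The hexagon contains three disjoint rhombi. -/
theorem le_card (h : HexCoords r V a b c) : 6 * r ^ 2 ≤ V.card := by
  have h1 := h.card_rhombus
  have h2 := h.rotate.card_rhombus
  have h3 := h.rotate.rotate.card_rhombus
  have d1 : Disjoint (V.filter fun v => 0 < a v ∧ b v ≤ 0)
      (V.filter fun v => 0 < b v ∧ c v ≤ 0) :=
    Finset.disjoint_filter.mpr fun v _ _ _ => by omega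
  have d2 : Disjoint ((V.filter fun v => 0 < a v ∧ b v ≤ 0) ∪
      (V.filter fun v => 0 < b v ∧ c v ≤ 0)) (V.filter fun v => 0 < c v ∧ a v ≤ 0) :=
    Finset.disjoint_union_left.mpr ⟨Finset.disjoint_filter.mpr fun v _ _ _ => by omega,
      Finset.disjoint_filter.mpr fun v _ _ _ => by omega⟩
  have hsub : (V.filter fun v => 0 < a v ∧ b v ≤ 0) ∪
      (V.filter fun v => 0 < b v ∧ c v ≤ 0) ∪ (V.filter fun v => 0 < c v ∧ a v ≤ 0) ⊆ V :=
    Finset.union_subset (Finset.union_subset (Finset.filter_subset _ _)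
      (Finset.filter_subset _ _)) (Finset.filter_subset _ _)
  have := Finset.card_le_card hsub
  rw [Finset.card_union_of_disjoint d2, Finset.card_union_of_disjoint d1] at this
  omega

/-- Edge-isoperimetric inequality for sets of at most half the size of the hexagon, with the
constant `(√6 - √3)² = 9 - 6√2` rounded up to `0.515`. -/
theorem card_le_cut_sq (h : HexCoords r V a b c) (hS : S ⊆ V) (hcard : S.card ≤ 3 * r ^ 2) :
    103 * S.card ≤ 200 * ((cutAlong V S a b).card + (cutAlong V S b c).card
      + (cutAlong V S c a).card) ^ 2 := by
  have hR := h.rotate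
  have hRR := hR.rotate
  have hSS : V \ (V \ S) = S := Finset.sdiff_sdiff_eq_self hS
  have hV := h.le_card
  have hcompl : (V \ S).card = V.card - S.card := Finset.card_sdiff_of_subset hS
  have m1 := h.card_mixedRows_le hS
  have m2 := hR.card_mixedRows_le hS
  have m3 := hRR.card_mixedRows_le hS
  have s1 := h.card_rows (S := S)
  have s2 := hR.card_rows (S := S)
  have s3 := hRR.card_rows (S := S)
  have w1 := h.card_le_mul hS
  have w2 := hR.card_le_mul hS
  have w3 := hRR.card_le_mul hS
  have k1 := h.card_le_mul (S := V \ S) Finset.sdiff_subset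
  have k2 := hR.card_le_mul (S := V \ S) Finset.sdiff_subset
  have k3 := hRR.card_le_mul (S := V \ S) Finset.sdiff_subset
  have x12 := h.card_full_add_card_empty_le (S := S)
  have x23 := hR.card_full_add_card_empty_le (S := S)
  have x31 := hRR.card_full_add_card_empty_le (S := S)
  have x21 := h.swap.card_full_add_card_empty_le (S := S)
  have x32 := hR.swap.card_full_add_card_empty_le (S := S)
  have x13 := hRR.swap.card_full_add_card_empty_le (S := S)
  rw [hSS] at k1 k2 k3
  exact row_count_inequality hcard (by omega) m1 m2 m3 s1 s2 s3 w1 w2 w3 k1 k2 k3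
    x12 x23 x31 x21 x32 x13

end HexCoords

/-- `V(G_r)` consists of the vertices whose three row coordinates lie in `[1 - r, r]`. -/
theorem mem_gridVerts_iff {r : ℕ} (hr : 1 ≤ r) (v : ℤ × ℤ) :
    v ∈ gridVerts r ↔ (1 - r ≤ v.2 ∧ v.2 ≤ r) ∧
      (1 - r ≤ -((v.2 - v.1) / 2) ∧ -((v.2 - v.1) / 2) ≤ r) ∧
      (1 - r ≤ 1 - (v.1 + v.2) / 2 ∧ 1 - (v.1 + v.2) / 2 ≤ r) := by
  obtain ⟨x, y⟩ := v
  simp only [gridVerts, hexCell, Set.mem_ofPred_eq, Set.mem_insert_iff,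
    Set.mem_singleton_iff, Prod.mk.injEq]
  constructor
  · rintro ⟨a, b, hab, hv⟩
    rcases hv with h | h | h | h | h | h <;> omega
  · rintro ⟨h1, h2, h3⟩
    obtain ⟨B, hB⟩ : ∃ B, B = -((y - x) / 2) := ⟨_, rfl⟩
    obtain ⟨C, hC⟩ : ∃ C, C = 1 - (x + y) / 2 := ⟨_, rfl⟩
    rw [← hB] at h2
    rw [← hC] at h3
    have hx : x = B + 1 - C := by omega
    have hs : y + B + C = 1 ∨ y + B + C = 2 := by omega
    clear hB hC
    subst hx
    rcases hs with hs | hs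
    · by_cases hy : B ≤ y ∧ C ≤ y
      · exact ⟨B, y - 1, by omega, by omega⟩
      by_cases hb : y ≤ B ∧ C ≤ B
      · exact ⟨B - 1, y, by omega, by omega⟩
      · exact ⟨B, y, by omega, by omega⟩
    · by_cases hy : y ≤ B ∧ y ≤ C
      · exact ⟨B - 1, y, by omega, by omega⟩
      by_cases hb : B ≤ y ∧ B ≤ C
      · exact ⟨B, y - 1, by omega, by omega⟩
      · exact ⟨B - 1, y - 1, by omega, by omega⟩

theorem gridVerts_finite {r : ℕ} (hr : 1 ≤ r) : (gridVerts r).Finite := by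
  refine ((Set.finite_Icc (-(4 * r : ℤ)) (4 * r)).prod
    (Set.finite_Icc (-(4 * r : ℤ)) (4 * r))).subset fun v hv => ?_
  rw [mem_gridVerts_iff hr] at hv
  simp only [Set.mem_prod, Set.mem_Icc]
  omega

theorem hexCoords_gridVerts {r : ℕ} (hr : 1 ≤ r) {V : Finset (ℤ × ℤ)}
    (hV : ∀ v, v ∈ V ↔ v ∈ gridVerts r) :
    HexCoords r V (fun v => v.2) (fun v => -((v.2 - v.1) / 2))
      (fun v => 1 - (v.1 + v.2) / 2) where
  inj v _ w _ h1 h2 h3 := by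
    ext <;> omega
  bounds v hv := by
    rw [hV, mem_gridVerts_iff hr] at hv
    omega
  surj A B C h1 h2 h3 h4 h5 h6 h7 := by
    refine ⟨(B + 1 - C, A), ?_, rfl, ?_, ?_⟩
    · rw [hV, mem_gridVerts_iff hr]
      omega
    · dsimp only
      omega
    · dsimp only
      omega

/-- Distinct points agreeing in two of the three row coordinates are adjacent. -/
theorem hexAdj_of_coords_eq {v w : ℤ × ℤ} (hne : v ≠ w)
    (h : (v.2 = w.2 ∧ (v.2 - v.1) / 2 = (w.2 - w.1) / 2) ∨
      ((v.2 - v.1) / 2 = (w.2 - w.1) / 2 ∧ (v.1 + v.2) / 2 = (w.1 + w.2) / 2) ∨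
      ((v.1 + v.2) / 2 = (w.1 + w.2) / 2 ∧ v.2 = w.2)) : hexAdj v w := by
  obtain ⟨x, y⟩ := v
  obtain ⟨x', y'⟩ := w
  simp only [ne_eq, Prod.mk.injEq] at hne
  simp only [hexAdj, Int.even_iff] at *
  omega

/-- For every `r ≥ 1` and every `W ⊆ V(G_r)` with `|W| ≤ 3r²`,
`|ℰ_{G_r}(W)| ≥ (√6 - √3) · √|W|`. -/
theorem finite_hex_edge_isoperimetric (r : ℕ) (hr : 1 ≤ r) (W : Set (ℤ × ℤ))
    (hWsub : W ⊆ gridVerts r) (hWfin : W.Finite) (hcard : W.ncard ≤ 3*r^2) :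
    (Real.sqrt 6 - Real.sqrt 3) * Real.sqrt W.ncard ≤ ((hexCutEdgesIn r W).ncard : ℝ) := by
  classical
  have hfin := gridVerts_finite hr
  have hV : ∀ v, v ∈ hfin.toFinset ↔ v ∈ gridVerts r := fun v => hfin.mem_toFinset
  have hS : ∀ v, v ∈ hWfin.toFinset ↔ v ∈ W := fun v => hWfin.mem_toFinset
  have hcoords := hexCoords_gridVerts hr hV
  have hsub : hWfin.toFinset ⊆ hfin.toFinset := fun v hv => by
    rw [hV]; exact hWsub ((hS v).mp hv)
  rw [Set.ncard_eq_toFinset_card W hWfin] at hcard ⊢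
  have hmain := hcoords.card_le_cut_sq hsub hcard
  generalize hfin.toFinset = V at *
  generalize hWfin.toFinset = S at *
  have hcut : (cutAlong V S (fun v => v.2) (fun v => -((v.2 - v.1) / 2))).card
      + (cutAlong V S (fun v => -((v.2 - v.1) / 2)) (fun v => 1 - (v.1 + v.2) / 2)).card
      + (cutAlong V S (fun v => 1 - (v.1 + v.2) / 2) (fun v => v.2)).card
      ≤ (hexCutEdgesIn r W).ncard := by
    have hne : ∀ v w, v ∈ S → w ∉ S → v ≠ w := fun v w hv hw e => hw (e ▸ hv)
    rw [← Finset.card_union_of_disjoint, ← Finset.card_union_of_disjoint,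
      ← Set.ncard_coe_finset]
    · refine Set.ncard_le_ncard ?_ ((hWfin.prod hfin).subset fun p hp => ⟨hp.1, hp.2.1⟩)
      rintro ⟨v, w⟩ hp
      simp only [cutAlong, Finset.coe_union, Finset.coe_filter, Finset.mem_product,
        Finset.mem_sdiff, Set.mem_union, Set.mem_ofPred_eq, neg_inj, sub_right_inj] at hp
      have hvw : v ∈ S ∧ w ∈ V ∧ w ∉ S := by tauto
      refine ⟨(hS v).mp hvw.1, (hV w).mp hvw.2.1, fun hw => hvw.2.2 ((hS w).mpr hw), ?_⟩
      exact hexAdj_of_coords_eq (hne v w hvw.1 hvw.2.2) (by tauto)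
    all_goals
      rw [Finset.disjoint_left]
      rintro ⟨v, w⟩ h1 h2
      simp only [cutAlong, Finset.mem_union, Finset.mem_filter, Finset.mem_product,
        Finset.mem_sdiff, neg_inj, sub_right_inj] at h1 h2
      refine hne v w h2.1.1 h2.1.2.2 ?_
      ext <;> omega
  have hbound : 103 * S.card ≤ 200 * (hexCutEdgesIn r W).ncard ^ 2 :=
    hmain.trans (by gcongr)
  have hboundR : (103 : ℝ) * S.card ≤ 200 * ((hexCutEdgesIn r W).ncard : ℝ) ^ 2 := by
    exact_mod_cast hbound
  have hconst : (Real.sqrt 6 - Real.sqrt 3) ^ 2 ≤ 103 / 200 := by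
    have h63 : Real.sqrt 6 = Real.sqrt 2 * Real.sqrt 3 := by
      rw [← Real.sqrt_mul (by norm_num)]; norm_num
    have h2 : (1.4142 : ℝ) ≤ Real.sqrt 2 := Real.le_sqrt_of_sq_le (by norm_num)
    have h2' : Real.sqrt 2 ^ 2 = 2 := Real.sq_sqrt (by norm_num)
    have h3 : Real.sqrt 3 ^ 2 = 3 := Real.sq_sqrt (by norm_num)
    calc (Real.sqrt 6 - Real.sqrt 3) ^ 2
        = Real.sqrt 3 ^ 2 * (Real.sqrt 2 ^ 2 - 2 * Real.sqrt 2 + 1) := by rw [h63]; ring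
      _ ≤ 103 / 200 := by rw [h2', h3]; linarith
  refine abs_le_of_sq_le_sq' ?_ (Nat.cast_nonneg _) |>.2
  rw [mul_pow, Real.sq_sqrt (Nat.cast_nonneg _)]
  have := mul_le_mul_of_nonneg_right hconst (Nat.cast_nonneg (α := ℝ) S.card)
  linarith
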